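/- Let Φ₁ : S₁(H₁) → S₁(K₁) and Φ₂ : S₁(H₂) → S₁(K₂) be quantum channels and Φ₁ ⊕ Φ₂ their direct sum acting on S₁(H₁ ⊕ H₂) (applying Φ_i on the diagonal blocks and erasing off-diagonal blocks). Then the one-shot quantum capacity satisfies Q^{(1)}(Φ₁ ⊕ Φ₂) = max{Q^{(1)}(Φ₁), Q^{(1)}(Φ₂)}, where Q^{(1)}(Φ) = max over pure bipartite inputs ρ^{AA′} of the coherent information H(Φ(ρ^{A′})) − H((id_A ⊗ Φ)(ρ^{AA′})). -/

import Mathlib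

open Matrix
open scoped BigOperators ComplexOrder

/-- Von Neumann entropy of a matrix (junk value `0` if not Hermitian),
computed spectrally with the convention `0 log 0 = 0`. -/
noncomputable def matEntropy {ι : Type*} [Fintype ι] [DecidableEq ι]
    (ρ : Matrix ι ι ℂ) : ℝ :=
  if h : ρ.IsHermitian then ∑ i, Real.negMulLog (h.eigenvalues i) else 0

/-- The ampliation `id_r ⊗ Φ` of a map `Φ` between matrix algebras. -/
def ampliate {r ι κ : Type*} (Φ : Matrix ι ι ℂ → Matrix κ κ ℂ)
    (X : Matrix (r × ι) (r × ι) ℂ) : Matrix (r × κ) (r × κ) ℂ :=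
  fun p q => Φ (fun c d => X (p.1, c) (q.1, d)) p.2 q.2

/-- Partial trace over the (first) reference system. -/
noncomputable def ptraceRef {r ι : Type*} [Fintype r] (X : Matrix (r × ι) (r × ι) ℂ) :
    Matrix ι ι ℂ :=
  fun a b => ∑ i, X (i, a) (i, b)

/-- The one-shot quantum capacity `Q^{(1)}(Φ)`: the supremum, over all reference
dimensions `d` and all pure bipartite input states `ψψ*`, of the coherent
information `H(Φ(ρ^{A′})) − H((id_A ⊗ Φ)(ρ^{AA′}))`. -/
noncomputable def Q1 {ι κ : Type*} [Fintype ι] [DecidableEq ι]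
    [Fintype κ] [DecidableEq κ] (Φ : Matrix ι ι ℂ → Matrix κ κ ℂ) : ℝ :=
  ⨆ d : ℕ, ⨆ ψ : {v : Fin d × ι → ℂ // ∑ x, ‖v x‖ ^ 2 = 1},
    (matEntropy (Φ (ptraceRef (Matrix.vecMulVec ψ.1 (star ψ.1)))) -
      matEntropy (ampliate Φ (Matrix.vecMulVec ψ.1 (star ψ.1))))

/-- A quantum channel: completely positive (all ampliations preserve positive
semidefiniteness) and trace preserving. -/
def IsCPTP {ι κ : Type*} [Fintype ι] [DecidableEq ι] [Fintype κ] [DecidableEq κ]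
    (Φ : Matrix ι ι ℂ → Matrix κ κ ℂ) : Prop :=
  (∀ (k : ℕ) (X : Matrix (Fin k × ι) (Fin k × ι) ℂ),
      X.PosSemidef → (ampliate Φ X).PosSemidef) ∧
  (∀ ρ, (Φ ρ).trace = ρ.trace)

/-- The direct sum channel `Φ₁ ⊕ Φ₂`: applies `Φ_i` on the diagonal blocks and
erases the off-diagonal blocks. -/
def dsumChannel {ι₁ κ₁ ι₂ κ₂ : Type*}
    (Φ₁ : Matrix ι₁ ι₁ ℂ → Matrix κ₁ κ₁ ℂ)
    (Φ₂ : Matrix ι₂ ι₂ ℂ → Matrix κ₂ κ₂ ℂ)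
    (ρ : Matrix (ι₁ ⊕ ι₂) (ι₁ ⊕ ι₂) ℂ) : Matrix (κ₁ ⊕ κ₂) (κ₁ ⊕ κ₂) ℂ :=
  Matrix.fromBlocks
    (Φ₁ (fun a b => ρ (Sum.inl a) (Sum.inl b))) 0 0
    (Φ₂ (fun a b => ρ (Sum.inr a) (Sum.inr b)))

/-!
Coherent information extends to unnormalised states and is positively homogeneous there: channels
are linear, and the terms `tr X * negMulLog c` by which `H (c X)` differs from `c H(X)` cancel
because channels preserve the trace. Entropy is additive over block-diagonal matrices, so the
coherent information of `Φ₁ ⊕ Φ₂` at a unit vector `v` is the sum of the coherent informations of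
the `Φᵢ` at the two components of `v`. By homogeneity this is at most the average of `Q1 Φ₁` and
`Q1 Φ₂` with the squared norms of the components as weights, and vectors concentrated in one summand
give the reverse inequality.
-/

section PosSemidef

variable {r ι κ : Type*}

lemma posSemidef_fromBlocks_zero [Finite ι] [Finite κ] {A : Matrix ι ι ℂ} {D : Matrix κ κ ℂ}
    (hA : A.PosSemidef) (hD : D.PosSemidef) : (fromBlocks A 0 0 D).PosSemidef := by
  cases nonempty_fintype ι
  cases nonempty_fintype κ
  refine .of_dotProduct_mulVec_nonneg (hA.1.fromBlocks conjTranspose_zero hD.1) fun x ↦ ?_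
  have hsplit : star x ⬝ᵥ (fromBlocks A 0 0 D *ᵥ x) =
      star (x ∘ Sum.inl) ⬝ᵥ (A *ᵥ (x ∘ Sum.inl)) +
        star (x ∘ Sum.inr) ⬝ᵥ (D *ᵥ (x ∘ Sum.inr)) := by
    simp [fromBlocks_mulVec, dotProduct]
  rw [hsplit]
  exact add_nonneg (hA.dotProduct_mulVec_nonneg _) (hD.dotProduct_mulVec_nonneg _)

variable [Fintype ι] [Fintype κ]

lemma mul_eq_zero_of_trace_conjTranspose_mul_mul_eq_zero {P : Matrix ι ι ℂ} (hP : P.PosSemidef)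
    {U : Matrix ι κ ℂ} (h : (Uᴴ * P * U).trace = 0) : P * U = 0 := by
  have hU : Uᴴ * P * U = 0 := (hP.conjTranspose_mul_mul_same U).trace_eq_zero_iff.1 h
  ext i b
  have hb : star (U.col b) ⬝ᵥ (P *ᵥ U.col b) = 0 := by
    rw [dotProduct_mulVec]
    exact congrFun₂ hU b b
  exact congrFun ((hP.dotProduct_mulVec_zero_iff _).1 hb) i

lemma sum_smul_submatrix_eq_zero_of_sum_trace_eq_zero [Fintype r] {P : Matrix (r × κ) (r × κ) ℂ}
    (hP : P.PosSemidef) {c : r → ℂ}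
    (h : ∑ i, ∑ j, star (c i) * c j * (P.submatrix (Prod.mk i) (Prod.mk j)).trace = 0) (i : r) :
    ∑ j, c j • P.submatrix (Prod.mk i) (Prod.mk j) = 0 := by
  classical
  let U : Matrix (r × κ) κ ℂ := fun p b ↦ c p.1 * (1 : Matrix κ κ ℂ) p.2 b
  have hPU (i : r) : (P * U).submatrix (Prod.mk i) id =
      ∑ j, c j • P.submatrix (Prod.mk i) (Prod.mk j) := by
    ext s b
    rw [submatrix_apply, mul_apply, Fintype.sum_prod_type]
    simp [U, one_apply, Matrix.sum_apply, mul_comm]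
  have hUM (M : Matrix (r × κ) κ ℂ) :
      Uᴴ * M = ∑ i, star (c i) • M.submatrix (Prod.mk i) id := by
    ext s b
    simp only [mul_apply, conjTranspose_apply, Fintype.sum_prod_type]
    simp [U, one_apply, Matrix.sum_apply, apply_ite]
  have htrace : (Uᴴ * P * U).trace = 0 := by
    simpa only [Matrix.mul_assoc, hUM, hPU, trace_sum, trace_smul, Finset.smul_sum, smul_smul,
      smul_eq_mul] using h
  rw [← hPU, mul_eq_zero_of_trace_conjTranspose_mul_mul_eq_zero hP htrace]
  rfl

end PosSemidef

section Entropy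

variable {ι κ : Type*} [Fintype ι] [DecidableEq ι] [Fintype κ] [DecidableEq κ]
  {A : Matrix ι ι ℂ}

lemma matEntropy_eq_sum_eigenvalues (hA : A.IsHermitian) :
    matEntropy A = ∑ i, Real.negMulLog (hA.eigenvalues i) :=
  dif_pos hA

lemma matEntropy_eq_sum_roots_charpoly (hA : A.IsHermitian) :
    matEntropy A = (A.charpoly.roots.map fun z ↦ Real.negMulLog z.re).sum := by
  rw [matEntropy_eq_sum_eigenvalues hA, hA.roots_charpoly_eq_eigenvalues, Multiset.map_map]
  rfl

lemma matEntropy_reindex (e : ι ≃ κ) (hA : A.IsHermitian) :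
    matEntropy (reindex e e A) = matEntropy A := by
  rw [reindex_apply, matEntropy_eq_sum_roots_charpoly (hA.submatrix _), ← reindex_apply,
    charpoly_reindex, ← matEntropy_eq_sum_roots_charpoly hA]

lemma matEntropy_fromBlocks_zero {B : Matrix κ κ ℂ} (hA : A.IsHermitian) (hB : B.IsHermitian) :
    matEntropy (fromBlocks A 0 0 B) = matEntropy A + matEntropy B := by
  rw [matEntropy_eq_sum_roots_charpoly (hA.fromBlocks conjTranspose_zero hB),
    charpoly_fromBlocks_zero₁₂,
    Polynomial.roots_mul (mul_ne_zero A.charpoly_monic.ne_zero B.charpoly_monic.ne_zero),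
    Multiset.map_add, Multiset.sum_add, ← matEntropy_eq_sum_roots_charpoly hA,
    ← matEntropy_eq_sum_roots_charpoly hB]

lemma matEntropy_cfc (hA : A.IsHermitian) (f : ℝ → ℝ) :
    matEntropy (cfc f A) = ∑ i, Real.negMulLog (f (hA.eigenvalues i)) := by
  rw [matEntropy_eq_sum_roots_charpoly (cfc_predicate f A), hA.charpoly_cfc_eq,
    Polynomial.roots_prod _ _ (Finset.prod_ne_zero_iff.2 fun _ _ ↦ Polynomial.X_sub_C_ne_zero _)]
  simp

lemma matEntropy_smul (hA : A.IsHermitian) (c : ℝ) :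
    matEntropy (c • A) = A.trace.re * Real.negMulLog c + c * matEntropy A := by
  rw [← cfc_const_mul_id c A hA.isSelfAdjoint, matEntropy_cfc hA, matEntropy_eq_sum_eigenvalues hA,
    hA.trace_eq_sum_eigenvalues]
  simp [Real.negMulLog_mul, Finset.sum_add_distrib, Finset.sum_mul, Finset.mul_sum]

lemma matEntropy_nonneg (hA : A.PosSemidef) (htrace : A.trace.re ≤ 1) : 0 ≤ matEntropy A := by
  rw [hA.1.trace_eq_sum_eigenvalues] at htrace
  rw [matEntropy_eq_sum_eigenvalues hA.1]
  refine Finset.sum_nonneg fun i _ ↦ Real.negMulLog_nonneg (hA.eigenvalues_nonneg i) ?_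
  calc hA.1.eigenvalues i ≤ ∑ j, hA.1.eigenvalues j :=
        Finset.single_le_sum (fun j _ ↦ hA.eigenvalues_nonneg j) (Finset.mem_univ i)
    _ ≤ 1 := by simpa using htrace

lemma matEntropy_le_card (hA : A.PosSemidef) : matEntropy A ≤ Fintype.card ι := by
  rw [matEntropy_eq_sum_eigenvalues hA.1, ← nsmul_one, ← Finset.card_univ]
  refine Finset.sum_le_card_nsmul _ _ _ fun i _ ↦ ?_
  have hi := hA.eigenvalues_nonneg i
  linarith [Real.negMulLog_le_one_sub_self hi]

end Entropy

section Channel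

variable {r ι κ : Type*}

lemma posSemidef_ptraceRef [Fintype r] {X : Matrix (r × ι) (r × ι) ℂ} (hX : X.PosSemidef) :
    (ptraceRef X).PosSemidef := by
  have hsum : ptraceRef X = ∑ i, X.submatrix (Prod.mk i) (Prod.mk i) := by
    ext a b
    simp [ptraceRef, Matrix.sum_apply]
  rw [hsum]
  exact posSemidef_sum _ fun i _ ↦ hX.submatrix _

lemma trace_ptraceRef [Fintype r] [Fintype ι] (X : Matrix (r × ι) (r × ι) ℂ) :
    (ptraceRef X).trace = X.trace := by
  simp only [trace, diag_apply, ptraceRef, Fintype.sum_prod_type]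
  exact Finset.sum_comm

lemma ptraceRef_smul [Fintype r] (c : ℝ) (X : Matrix (r × ι) (r × ι) ℂ) :
    ptraceRef (c • X) = c • ptraceRef X := by
  ext a b
  simp [ptraceRef, Finset.mul_sum]

namespace IsCPTP

variable [Fintype ι] [DecidableEq ι] [Fintype κ] [DecidableEq κ]
  {Φ : Matrix ι ι ℂ → Matrix κ κ ℂ}

lemma posSemidef_ampliate (h : IsCPTP Φ) [Finite r] {X : Matrix (r × ι) (r × ι) ℂ}
    (hX : X.PosSemidef) : (ampliate Φ X).PosSemidef := by
  let e := Finite.equivFin r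
  have hfin := h.1 _ _ (hX.submatrix (Prod.map e.symm id))
  have hreindex : ampliate Φ X =
      (ampliate Φ (X.submatrix (Prod.map e.symm id) (Prod.map e.symm id))).submatrix
        (Prod.map e id) (Prod.map e id) := by
    ext p q
    simp [ampliate]
  exact hreindex ▸ hfin.submatrix _

lemma posSemidef_map (h : IsCPTP Φ) {X : Matrix ι ι ℂ} (hX : X.PosSemidef) :
    (Φ X).PosSemidef :=
  (h.posSemidef_ampliate (hX.submatrix (Prod.snd : Unit × ι → ι))).submatrix (Prod.mk ())

lemma trace_ampliate (h : IsCPTP Φ) [Fintype r] (X : Matrix (r × ι) (r × ι) ℂ) :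
    (ampliate Φ X).trace = X.trace := by
  simp only [trace, diag_apply, Fintype.sum_prod_type]
  exact Finset.sum_congr rfl fun i _ ↦ h.2 (X.submatrix (Prod.mk i) (Prod.mk i))

/- The ampliation sends the block matrix `(V i)ᴴ * V j` to a positive semidefinite one, whose
compression by `c` has trace `tr ((∑ c i • V i)ᴴ * ∑ c j • V j) = 0`, as `Φ` preserves traces. -/
lemma sum_smul_map_conjTranspose_mul (h : IsCPTP Φ) [Fintype r] {V : r → Matrix ι ι ℂ} {c : r → ℂ}
    (hc : ∑ j, c j • V j = 0) (i : r) : ∑ j, c j • Φ ((V i)ᴴ * V j) = 0 := by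
  let W : Matrix ι (r × ι) ℂ := fun s p ↦ V p.1 s p.2
  refine sum_smul_submatrix_eq_zero_of_sum_trace_eq_zero
    (h.posSemidef_ampliate (posSemidef_conjTranspose_mul_self W)) ?_ i
  calc
    _ = ∑ i, ∑ j, star (c i) * c j * ((V i)ᴴ * V j).trace :=
      Finset.sum_congr rfl fun i _ ↦ Finset.sum_congr rfl fun j _ ↦
        congrArg (star (c i) * c j * ·) (h.2 ((V i)ᴴ * V j))
    _ = ((∑ i, c i • V i)ᴴ * ∑ j, c j • V j).trace := by
      simp_rw [conjTranspose_sum, Matrix.sum_mul, Matrix.mul_sum, trace_sum]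
      simp [mul_assoc, mul_left_comm]
    _ = 0 := by simp [hc]

lemma sum_smul_map_eq_zero (h : IsCPTP Φ) [Fintype r] {V : r → Matrix ι ι ℂ} {c : r → ℂ}
    (hc : ∑ j, c j • V j = 0) : ∑ j, c j • Φ (V j) = 0 := by
  -- Adjoin `1` with coefficient `0`: the `V j` are its row of the Gram matrix.
  have hadjoin : ∑ j : Option r, j.elim 0 c • j.elim 1 V = 0 := by
    simpa [Fintype.sum_option] using hc
  simpa [Fintype.sum_option] using h.sum_smul_map_conjTranspose_mul hadjoin none

lemma isLinearMap (h : IsCPTP Φ) : IsLinearMap ℂ Φ where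
  map_add X Y := by
    have hXY : ∑ j, (![1, -1, -1] : Fin 3 → ℂ) j • ![X + Y, X, Y] j = 0 := by
      simp [Fin.sum_univ_three]
    have hΦ : Φ (X + Y) - Φ X - Φ Y = 0 := by
      simpa [Fin.sum_univ_three, sub_eq_add_neg] using h.sum_smul_map_eq_zero hXY
    rwa [sub_sub, sub_eq_zero] at hΦ
  map_smul a X := by
    have haX : ∑ j, ![1, -a] j • ![a • X, X] j = 0 := by simp
    have hΦ : Φ (a • X) - a • Φ X = 0 := by
      simpa [sub_eq_add_neg] using h.sum_smul_map_eq_zero haX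
    exact sub_eq_zero.1 hΦ

lemma ampliate_smul (h : IsCPTP Φ) (c : ℝ) (X : Matrix (r × ι) (r × ι) ℂ) :
    ampliate Φ (c • X) = c • ampliate Φ X := by
  ext p q
  exact congrFun₂ (h.isLinearMap.map_smul c (X.submatrix (Prod.mk p.1) (Prod.mk q.1))) p.2 q.2

end IsCPTP
end Channel

section CoherentInfo

variable {r ι κ : Type*} [Fintype r] [DecidableEq r] [Fintype κ] [DecidableEq κ]

/-- The coherent information `H(Φ(X^{A′})) − H((id_A ⊗ Φ)(X^{AA′}))`, the reference `A` being the
first factor. The input `X` is not required to have trace one, so that the two blocks of a state on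
a direct sum are admissible inputs. -/
noncomputable def coherentInfo (Φ : Matrix ι ι ℂ → Matrix κ κ ℂ)
    (X : Matrix (r × ι) (r × ι) ℂ) : ℝ :=
  matEntropy (Φ (ptraceRef X)) - matEntropy (ampliate Φ X)

namespace IsCPTP

variable [Fintype ι] [DecidableEq ι] {Φ : Matrix ι ι ℂ → Matrix κ κ ℂ}
  {X : Matrix (r × ι) (r × ι) ℂ}

lemma coherentInfo_smul (h : IsCPTP Φ) (hX : X.PosSemidef) (c : ℝ) :
    coherentInfo Φ (c • X) = c * coherentInfo Φ X := by
  have hΦ : Φ (c • ptraceRef X) = c • Φ (ptraceRef X) := h.isLinearMap.map_smul c (ptraceRef X)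
  rw [coherentInfo, ptraceRef_smul, hΦ, h.ampliate_smul,
    matEntropy_smul (h.posSemidef_map (posSemidef_ptraceRef hX)).1,
    matEntropy_smul (h.posSemidef_ampliate hX).1, h.2, trace_ptraceRef, h.trace_ampliate,
    coherentInfo]
  ring

lemma coherentInfo_zero (h : IsCPTP Φ) : coherentInfo Φ (0 : Matrix (r × ι) (r × ι) ℂ) = 0 := by
  simpa using h.coherentInfo_smul (.zero (n := r × ι)) 0

lemma coherentInfo_le_card (h : IsCPTP Φ) (hX : X.PosSemidef) (htrace : X.trace.re ≤ 1) :
    coherentInfo Φ X ≤ Fintype.card κ := by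
  have hout := matEntropy_le_card (h.posSemidef_map (posSemidef_ptraceRef hX))
  have hjoint := matEntropy_nonneg (h.posSemidef_ampliate hX) (by rwa [h.trace_ampliate])
  rw [coherentInfo]
  linarith

end IsCPTP

end CoherentInfo

section DirectSum

variable {r ι₁ κ₁ ι₂ κ₂ : Type*} {Φ₁ : Matrix ι₁ ι₁ ℂ → Matrix κ₁ κ₁ ℂ}
  {Φ₂ : Matrix ι₂ ι₂ ℂ → Matrix κ₂ κ₂ ℂ}

lemma ampliate_dsumChannel (X : Matrix (r × (ι₁ ⊕ ι₂)) (r × (ι₁ ⊕ ι₂)) ℂ) :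
    ampliate (dsumChannel Φ₁ Φ₂) X =
      reindex (Equiv.prodSumDistrib r κ₁ κ₂).symm (Equiv.prodSumDistrib r κ₁ κ₂).symm
        (fromBlocks (ampliate Φ₁ (X.submatrix (Prod.map id Sum.inl) (Prod.map id Sum.inl))) 0 0
          (ampliate Φ₂ (X.submatrix (Prod.map id Sum.inr) (Prod.map id Sum.inr)))) := by
  ext ⟨i, s⟩ ⟨j, t⟩
  rcases s with s | s <;> rcases t with t | t <;> rfl

variable [Fintype ι₁] [DecidableEq ι₁] [Fintype κ₁] [DecidableEq κ₁]
  [Fintype ι₂] [DecidableEq ι₂] [Fintype κ₂] [DecidableEq κ₂]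

lemma isCPTP_dsumChannel (h₁ : IsCPTP Φ₁) (h₂ : IsCPTP Φ₂) : IsCPTP (dsumChannel Φ₁ Φ₂) := by
  refine ⟨fun k X hX ↦ ?_, fun ρ ↦ ?_⟩
  · rw [ampliate_dsumChannel]
    exact (posSemidef_fromBlocks_zero (h₁.posSemidef_ampliate (hX.submatrix _))
      (h₂.posSemidef_ampliate (hX.submatrix _))).submatrix _
  · calc (dsumChannel Φ₁ Φ₂ ρ).trace
      _ = (Φ₁ (ρ.submatrix Sum.inl Sum.inl)).trace + (Φ₂ (ρ.submatrix Sum.inr Sum.inr)).trace :=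
        Fintype.sum_sum_type _
      _ = (ρ.submatrix Sum.inl Sum.inl).trace + (ρ.submatrix Sum.inr Sum.inr).trace := by
        rw [h₁.2, h₂.2]
      _ = ρ.trace := (Fintype.sum_sum_type fun s ↦ ρ s s).symm

lemma coherentInfo_dsumChannel [Fintype r] [DecidableEq r] (h₁ : IsCPTP Φ₁) (h₂ : IsCPTP Φ₂)
    {X : Matrix (r × (ι₁ ⊕ ι₂)) (r × (ι₁ ⊕ ι₂)) ℂ} (hX : X.PosSemidef) :
    coherentInfo (dsumChannel Φ₁ Φ₂) X =
      coherentInfo Φ₁ (X.submatrix (Prod.map id Sum.inl) (Prod.map id Sum.inl)) +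
        coherentInfo Φ₂ (X.submatrix (Prod.map id Sum.inr) (Prod.map id Sum.inr)) := by
  set X₁ := X.submatrix (Prod.map id Sum.inl) (Prod.map id Sum.inl)
  set X₂ := X.submatrix (Prod.map id Sum.inr) (Prod.map id Sum.inr)
  have hX₁ : X₁.PosSemidef := hX.submatrix _
  have hX₂ : X₂.PosSemidef := hX.submatrix _
  have hout : dsumChannel Φ₁ Φ₂ (ptraceRef X) =
      fromBlocks (Φ₁ (ptraceRef X₁)) 0 0 (Φ₂ (ptraceRef X₂)) := rfl
  have hamp₁ := h₁.posSemidef_ampliate hX₁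
  have hamp₂ := h₂.posSemidef_ampliate hX₂
  rw [coherentInfo, hout, ampliate_dsumChannel,
    matEntropy_fromBlocks_zero (h₁.posSemidef_map (posSemidef_ptraceRef hX₁)).1
      (h₂.posSemidef_map (posSemidef_ptraceRef hX₂)).1,
    matEntropy_reindex _ (posSemidef_fromBlocks_zero hamp₁ hamp₂).1,
    matEntropy_fromBlocks_zero hamp₁.1 hamp₂.1, coherentInfo, coherentInfo]
  ring

end DirectSum

section PureState

variable {α : Type*}

lemma vecMulVec_smul_self_star (c : ℝ) (v : α → ℂ) :
    vecMulVec (c • v) (star (c • v)) = c ^ 2 • vecMulVec v (star v) := by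
  rw [star_smul, star_trivial, smul_vecMulVec, vecMulVec_smul, smul_smul, sq]

lemma trace_vecMulVec_self_star [Fintype α] (v : α → ℂ) :
    (vecMulVec v (star v)).trace = (∑ x, ‖v x‖ ^ 2 : ℝ) := by
  simp [trace_vecMulVec, dotProduct, Complex.mul_conj, Complex.normSq_eq_norm_sq]

lemma exists_eq_sqrt_smul_of_ne_zero [Fintype α] {v : α → ℂ} (hv : v ≠ 0) :
    ∃ w : α → ℂ, ∑ x, ‖w x‖ ^ 2 = 1 ∧ v = √(∑ x, ‖v x‖ ^ 2) • w := by
  have hp : 0 < ∑ x, ‖v x‖ ^ 2 := by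
    obtain ⟨x, hx⟩ := Function.ne_iff.1 hv
    exact Finset.sum_pos' (fun _ _ ↦ sq_nonneg _)
      ⟨x, Finset.mem_univ x, pow_pos (norm_pos_iff.2 hx) 2⟩
  refine ⟨(√(∑ x, ‖v x‖ ^ 2))⁻¹ • v, ?_, (smul_inv_smul₀ (Real.sqrt_ne_zero'.2 hp) v).symm⟩
  simp [mul_pow, Real.sq_sqrt hp.le, ← Finset.mul_sum, hp.ne']

end PureState

section Capacity

variable {ι κ : Type*} [Fintype ι] [Fintype κ] [DecidableEq κ]
  {Φ : Matrix ι ι ℂ → Matrix κ κ ℂ} {d : ℕ}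

/-- The supremum defining `Q1 Φ`, restricted to pure inputs with a reference of dimension `d`. It
is `0` if there are none. -/
noncomputable def Q1AtRefDim (Φ : Matrix ι ι ℂ → Matrix κ κ ℂ) (d : ℕ) : ℝ :=
  ⨆ ψ : {v : Fin d × ι → ℂ // ∑ x, ‖v x‖ ^ 2 = 1}, coherentInfo Φ (vecMulVec ψ.1 (star ψ.1))

lemma Q1AtRefDim_zero : Q1AtRefDim Φ 0 = 0 := by
  have : IsEmpty {v : Fin 0 × ι → ℂ // ∑ x, ‖v x‖ ^ 2 = 1} := ⟨fun ψ ↦ by simpa using ψ.2⟩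
  exact Real.iSup_of_isEmpty _

lemma Q1AtRefDim_le {C : ℝ} (hC : 0 ≤ C)
    (hb : ∀ v : Fin d × ι → ℂ, ∑ x, ‖v x‖ ^ 2 = 1 → coherentInfo Φ (vecMulVec v (star v)) ≤ C) :
    Q1AtRefDim Φ d ≤ C :=
  Real.iSup_le (fun ψ ↦ hb ψ.1 ψ.2) hC

variable [DecidableEq ι]

lemma Q1_le {C : ℝ} (hC : 0 ≤ C)
    (hb : ∀ (d : ℕ) (v : Fin d × ι → ℂ), ∑ x, ‖v x‖ ^ 2 = 1 →
      coherentInfo Φ (vecMulVec v (star v)) ≤ C) : Q1 Φ ≤ C :=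
  ciSup_le fun d ↦ Q1AtRefDim_le hC (hb d)

namespace IsCPTP

lemma coherentInfo_pure_le_card (h : IsCPTP Φ) {v : Fin d × ι → ℂ} (hv : ∑ x, ‖v x‖ ^ 2 = 1) :
    coherentInfo Φ (vecMulVec v (star v)) ≤ Fintype.card κ :=
  h.coherentInfo_le_card (posSemidef_vecMulVec_self_star v)
    (by rw [trace_vecMulVec_self_star, hv, Complex.ofReal_re])

lemma Q1AtRefDim_le_Q1 (h : IsCPTP Φ) (d : ℕ) : Q1AtRefDim Φ d ≤ Q1 Φ :=
  le_ciSup (f := Q1AtRefDim Φ) ⟨Fintype.card κ, Set.forall_mem_range.2 fun _ ↦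
    Q1AtRefDim_le (Nat.cast_nonneg _) fun _ ↦ h.coherentInfo_pure_le_card⟩ d

/- There are no unit vectors at reference dimension zero, so the junk value of the empty supremum
bounds `Q1` from below. -/
lemma Q1_nonneg (h : IsCPTP Φ) : 0 ≤ Q1 Φ :=
  Q1AtRefDim_zero.symm.le.trans (h.Q1AtRefDim_le_Q1 0)

lemma coherentInfo_pure_le_Q1 (h : IsCPTP Φ) {v : Fin d × ι → ℂ} (hv : ∑ x, ‖v x‖ ^ 2 = 1) :
    coherentInfo Φ (vecMulVec v (star v)) ≤ Q1 Φ := by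
  refine le_trans ?_ (h.Q1AtRefDim_le_Q1 d)
  exact le_ciSup
    (f := fun ψ : {v : Fin d × ι → ℂ // ∑ x, ‖v x‖ ^ 2 = 1} ↦
      coherentInfo Φ (vecMulVec ψ.1 (star ψ.1)))
    ⟨Fintype.card κ, Set.forall_mem_range.2 fun ψ ↦ h.coherentInfo_pure_le_card ψ.2⟩ ⟨v, hv⟩

lemma coherentInfo_pure_le_mul_Q1 (h : IsCPTP Φ) (v : Fin d × ι → ℂ) :
    coherentInfo Φ (vecMulVec v (star v)) ≤ (∑ x, ‖v x‖ ^ 2) * Q1 Φ := by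
  obtain rfl | hv := eq_or_ne v 0
  · simp [h.coherentInfo_zero]
  obtain ⟨w, hw, hvw⟩ := exists_eq_sqrt_smul_of_ne_zero hv
  have hp : 0 ≤ ∑ x, ‖v x‖ ^ 2 := Finset.sum_nonneg fun _ _ ↦ sq_nonneg _
  calc coherentInfo Φ (vecMulVec v (star v))
    _ = (∑ x, ‖v x‖ ^ 2) * coherentInfo Φ (vecMulVec w (star w)) := by
      conv_lhs => rw [hvw]
      rw [vecMulVec_smul_self_star, Real.sq_sqrt hp,
        h.coherentInfo_smul (posSemidef_vecMulVec_self_star w)]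
    _ ≤ (∑ x, ‖v x‖ ^ 2) * Q1 Φ :=
      mul_le_mul_of_nonneg_left (h.coherentInfo_pure_le_Q1 hw) hp

end IsCPTP

end Capacity

section DirectSumVector

variable {r ι₁ ι₂ : Type*}

/-- The direct sum `v₁ ⊕ v₂`, under the identification `r ⊗ (ι₁ ⊕ ι₂) = r ⊗ ι₁ ⊕ r ⊗ ι₂`. -/
def dsumVec (v₁ : r × ι₁ → ℂ) (v₂ : r × ι₂ → ℂ) : r × (ι₁ ⊕ ι₂) → ℂ :=
  Sum.elim v₁ v₂ ∘ Equiv.prodSumDistrib r ι₁ ι₂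

lemma exists_eq_dsumVec (v : r × (ι₁ ⊕ ι₂) → ℂ) :
    ∃ v₁ v₂, v = dsumVec v₁ v₂ := by
  refine ⟨v ∘ Prod.map id Sum.inl, v ∘ Prod.map id Sum.inr, ?_⟩
  ext ⟨i, s | s⟩ <;> rfl

lemma sum_norm_sq_dsumVec [Fintype r] [Fintype ι₁] [Fintype ι₂] (v₁ : r × ι₁ → ℂ)
    (v₂ : r × ι₂ → ℂ) :
    ∑ x, ‖dsumVec v₁ v₂ x‖ ^ 2 = ∑ x, ‖v₁ x‖ ^ 2 + ∑ x, ‖v₂ x‖ ^ 2 :=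
  ((Equiv.prodSumDistrib r ι₁ ι₂).sum_comp fun y ↦ ‖Sum.elim v₁ v₂ y‖ ^ 2).trans
    (Fintype.sum_sum_type _)

end DirectSumVector

section DirectSumCapacity

variable {ι₁ κ₁ ι₂ κ₂ : Type*} [Fintype ι₁] [DecidableEq ι₁] [Fintype κ₁] [DecidableEq κ₁]
  [Fintype ι₂] [DecidableEq ι₂] [Fintype κ₂] [DecidableEq κ₂]
  {Φ₁ : Matrix ι₁ ι₁ ℂ → Matrix κ₁ κ₁ ℂ} {Φ₂ : Matrix ι₂ ι₂ ℂ → Matrix κ₂ κ₂ ℂ}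

lemma coherentInfo_dsumChannel_dsumVec {r : Type*} [Fintype r] [DecidableEq r] (h₁ : IsCPTP Φ₁)
    (h₂ : IsCPTP Φ₂) (v₁ : r × ι₁ → ℂ) (v₂ : r × ι₂ → ℂ) :
    coherentInfo (dsumChannel Φ₁ Φ₂) (vecMulVec (dsumVec v₁ v₂) (star (dsumVec v₁ v₂))) =
      coherentInfo Φ₁ (vecMulVec v₁ (star v₁)) + coherentInfo Φ₂ (vecMulVec v₂ (star v₂)) :=
  coherentInfo_dsumChannel h₁ h₂ (posSemidef_vecMulVec_self_star _)

lemma Q1_dsumChannel_le (h₁ : IsCPTP Φ₁) (h₂ : IsCPTP Φ₂) :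
    Q1 (dsumChannel Φ₁ Φ₂) ≤ max (Q1 Φ₁) (Q1 Φ₂) := by
  refine Q1_le (h₁.Q1_nonneg.trans (le_max_left _ _)) fun d v hv ↦ ?_
  obtain ⟨v₁, v₂, rfl⟩ := exists_eq_dsumVec v
  rw [sum_norm_sq_dsumVec] at hv
  calc coherentInfo (dsumChannel Φ₁ Φ₂) (vecMulVec (dsumVec v₁ v₂) (star (dsumVec v₁ v₂)))
    _ = coherentInfo Φ₁ (vecMulVec v₁ (star v₁)) + coherentInfo Φ₂ (vecMulVec v₂ (star v₂)) :=
      coherentInfo_dsumChannel_dsumVec h₁ h₂ v₁ v₂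
    _ ≤ (∑ x, ‖v₁ x‖ ^ 2) * Q1 Φ₁ + (∑ x, ‖v₂ x‖ ^ 2) * Q1 Φ₂ :=
      add_le_add (h₁.coherentInfo_pure_le_mul_Q1 v₁) (h₂.coherentInfo_pure_le_mul_Q1 v₂)
    _ ≤ max (Q1 Φ₁) (Q1 Φ₂) :=
      Convex.combo_le_max (Q1 Φ₁) (Q1 Φ₂) (Finset.sum_nonneg fun _ _ ↦ sq_nonneg _)
        (Finset.sum_nonneg fun _ _ ↦ sq_nonneg _) hv

lemma Q1_le_Q1_dsumChannel_left (h₁ : IsCPTP Φ₁) (h₂ : IsCPTP Φ₂) :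
    Q1 Φ₁ ≤ Q1 (dsumChannel Φ₁ Φ₂) := by
  have h := isCPTP_dsumChannel h₁ h₂
  refine Q1_le h.Q1_nonneg fun d v hv ↦ ?_
  have hsum := coherentInfo_dsumChannel_dsumVec h₁ h₂ v 0
  rw [star_zero, vecMulVec_zero, h₂.coherentInfo_zero, add_zero] at hsum
  exact hsum ▸ h.coherentInfo_pure_le_Q1 (by simpa [sum_norm_sq_dsumVec] using hv)

lemma Q1_le_Q1_dsumChannel_right (h₁ : IsCPTP Φ₁) (h₂ : IsCPTP Φ₂) :
    Q1 Φ₂ ≤ Q1 (dsumChannel Φ₁ Φ₂) := by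
  have h := isCPTP_dsumChannel h₁ h₂
  refine Q1_le h.Q1_nonneg fun d v hv ↦ ?_
  have hsum := coherentInfo_dsumChannel_dsumVec h₁ h₂ 0 v
  rw [star_zero, vecMulVec_zero, h₁.coherentInfo_zero, zero_add] at hsum
  exact hsum ▸ h.coherentInfo_pure_le_Q1 (by simpa [sum_norm_sq_dsumVec] using hv)

theorem Q1_dsumChannel_general (h₁ : IsCPTP Φ₁) (h₂ : IsCPTP Φ₂) :
    Q1 (dsumChannel Φ₁ Φ₂) = max (Q1 Φ₁) (Q1 Φ₂) :=
  (Q1_dsumChannel_le h₁ h₂).antisymm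
    (max_le (Q1_le_Q1_dsumChannel_left h₁ h₂) (Q1_le_Q1_dsumChannel_right h₁ h₂))

end DirectSumCapacity

/-- For quantum channels `Φ₁ : S₁(H₁) → S₁(K₁)` and
`Φ₂ : S₁(H₂) → S₁(K₂)`, the one-shot quantum capacity of the direct sum channel
satisfies `Q^{(1)}(Φ₁ ⊕ Φ₂) = max{Q^{(1)}(Φ₁), Q^{(1)}(Φ₂)}`. -/
theorem Q1_dsumChannel {h₁ k₁ h₂ k₂ : ℕ}
    (Φ₁ : Matrix (Fin h₁) (Fin h₁) ℂ → Matrix (Fin k₁) (Fin k₁) ℂ)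
    (Φ₂ : Matrix (Fin h₂) (Fin h₂) ℂ → Matrix (Fin k₂) (Fin k₂) ℂ)
    (hΦ₁ : IsCPTP Φ₁) (hΦ₂ : IsCPTP Φ₂) :
    Q1 (dsumChannel Φ₁ Φ₂) = max (Q1 Φ₁) (Q1 Φ₂) :=
  Q1_dsumChannel_general hΦ₁ hΦ₂
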